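/- For an integer n ≥ 1, define h_n(x) = (−1)^{n+1} · ∫_0^x cos((2n+1)s/2)/(2·cos(s/2)) ds. Then for every integer n ≥ 21 and every x ∈ [π/n, π − π/n], one has h_n(x) ≤ 0.18·x. -/

import Mathlib

open Real intervalIntegral

noncomputable def hOsc (n : ℕ) (x : ℝ) : ℝ :=
  (-1 : ℝ) ^ (n + 1) *
    ∫ s in (0:ℝ)..x, Real.cos ((2 * n + 1) * s / 2) / (2 * Real.cos (s / 2))

/-!
The amplitude `g s = 1 / (2 cos (s / 2))` is increasing and convex on `[0, π)`, so two integrations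
by parts against `cos (a s)`, with `a = n + 1 / 2`, bound the integral by
`g x / a + 2 g' x / a ^ 2`. Since `g' ≤ g ^ 2`, this is at most `w + 2 w ^ 2` with `w = g x / a`, a
convex function of `x`. It therefore lies below the line `0.18 x` on `[π / n, π - π / n]` as soon
as it does so at the two endpoints, where `w ≤ 1 / (2 n)` and `w ≤ 1 / π` respectively.
-/

open Set MeasureTheory

section OscillatoryIntegral

variable {a b c : ℝ} {g g' g'' : ℝ → ℝ}

lemma integral_mul_cos_mul_eq (ha : a ≠ 0)
    (hg : ∀ s ∈ uIcc b c, HasDerivAt g (g' s) s) (hg' : ∀ s ∈ uIcc b c, HasDerivAt g' (g'' s) s)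
    (hg'' : IntervalIntegrable g'' volume b c) :
    ∫ s in b..c, g s * cos (a * s) =
      (g c * sin (a * c) - g b * sin (a * b)) / a
        + (g' c * cos (a * c) - g' b * cos (a * b) - ∫ s in b..c, g'' s * cos (a * s)) / a ^ 2 := by
  have hlin (s : ℝ) : HasDerivAt (a * ·) a s := by
    simpa using (hasDerivAt_id s).const_mul a
  have hsin (s : ℝ) : HasDerivAt (fun s ↦ sin (a * s) / a) (cos (a * s)) s := by
    simpa [ha] using (hlin s).sin.div_const a
  have hcos (s : ℝ) : HasDerivAt (fun s ↦ -cos (a * s) / a) (sin (a * s)) s := by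
    simpa [ha] using (hlin s).cos.neg.div_const a
  have hg'_int : IntervalIntegrable g' volume b c :=
    ContinuousOn.intervalIntegrable fun s hs ↦ (hg' s hs).continuousAt.continuousWithinAt
  have first_parts := integral_mul_deriv_eq_deriv_mul hg (fun s _ ↦ hsin s) hg'_int
    (Continuous.intervalIntegrable (by fun_prop) _ _)
  have second_parts := integral_mul_deriv_eq_deriv_mul hg' (fun s _ ↦ hcos s) hg''
    (Continuous.intervalIntegrable (by fun_prop) _ _)
  simp only [← mul_div_assoc, mul_neg, neg_div, intervalIntegral.integral_neg,
    intervalIntegral.integral_div] at first_parts second_parts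
  rw [first_parts, second_parts]
  field_simp
  ring

lemma intervalIntegrable_of_hasDerivAt_of_nonneg (hbc : b ≤ c)
    (hg : ∀ s ∈ Icc b c, HasDerivAt g (g' s) s) (hg' : ∀ s ∈ Icc b c, 0 ≤ g' s) :
    IntervalIntegrable g' volume b c := by
  refine intervalIntegrable_deriv_of_nonneg (g := g) ?_ ?_ ?_
  · rw [uIcc_of_le hbc]
    exact fun s hs ↦ (hg s hs).continuousAt.continuousWithinAt
  all_goals rw [min_eq_left hbc, max_eq_right hbc]
  · exact fun s hs ↦ hg s (Ioo_subset_Icc_self hs)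
  · exact fun s hs ↦ hg' s (Ioo_subset_Icc_self hs)

lemma abs_integral_deriv_mul_cos_mul_le (hbc : b ≤ c) (hg : ∀ s ∈ Icc b c, HasDerivAt g (g' s) s)
    (hg' : ∀ s ∈ Icc b c, 0 ≤ g' s) : |∫ s in b..c, g' s * cos (a * s)| ≤ g c - g b := by
  have hg'_int := intervalIntegrable_of_hasDerivAt_of_nonneg hbc hg hg'
  calc |∫ s in b..c, g' s * cos (a * s)|
      ≤ ∫ s in b..c, g' s := by
        rw [← norm_eq_abs]
        refine norm_integral_le_of_norm_le hbc (ae_of_all _ fun s hs ↦ ?_) hg'_int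
        rw [norm_mul, norm_of_nonneg (hg' s (Ioc_subset_Icc_self hs))]
        exact mul_le_of_le_one_right (hg' s (Ioc_subset_Icc_self hs)) (abs_cos_le_one _)
    _ = g c - g b := integral_eq_sub_of_hasDerivAt (by rwa [uIcc_of_le hbc]) hg'_int

lemma abs_integral_mul_cos_mul_le_of_deriv2_nonneg (ha : 0 < a) (hc : 0 ≤ c)
    (hg : ∀ s ∈ Icc 0 c, HasDerivAt g (g' s) s) (hg' : ∀ s ∈ Icc 0 c, HasDerivAt g' (g'' s) s)
    (hg'' : ∀ s ∈ Icc 0 c, 0 ≤ g'' s) (hg'_zero : 0 ≤ g' 0) :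
    |∫ s in 0..c, g s * cos (a * s)| ≤ |g c| / a + 2 * g' c / a ^ 2 := by
  have hg''_int := intervalIntegrable_of_hasDerivAt_of_nonneg hc hg' hg''
  have hrem := abs_integral_deriv_mul_cos_mul_le (a := a) hc hg' hg''
  have hg'_le : g' 0 ≤ g' c := sub_nonneg.1 ((abs_nonneg _).trans hrem)
  have hsin : |g c * sin (a * c)| ≤ |g c| := by
    rw [abs_mul]
    exact mul_le_of_le_one_right (abs_nonneg _) (abs_sin_le_one _)
  have hcos : |g' c * cos (a * c)| ≤ g' c := by
    rw [abs_mul, abs_of_nonneg (hg'_zero.trans hg'_le)]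
    exact mul_le_of_le_one_right (hg'_zero.trans hg'_le) (abs_cos_le_one _)
  rw [← uIcc_of_le hc] at hg hg'
  rw [integral_mul_cos_mul_eq ha.ne' hg hg' hg''_int]
  simp only [mul_zero, sin_zero, cos_zero, mul_one, sub_zero]
  refine (abs_add_le _ _).trans ?_
  rw [abs_div, abs_div, abs_of_pos ha, abs_of_pos (pow_pos ha 2)]
  gcongr
  rw [abs_le] at hcos hrem ⊢
  constructor <;> linarith

end OscillatoryIntegral

/-- The amplitude `1 / (2 cos (s / 2))` of the oscillating integrand of `hOsc`. -/
noncomputable def halfSec (s : ℝ) : ℝ :=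
  (2 * cos (s / 2))⁻¹

lemma cos_half_pos {s : ℝ} (hs : s ∈ Ioo (-π) π) : 0 < cos (s / 2) :=
  cos_pos_of_mem_Ioo ⟨by linarith [hs.1], by linarith [hs.2]⟩

lemma halfSec_pos {s : ℝ} (hs : s ∈ Ioo (-π) π) : 0 < halfSec s :=
  inv_pos.2 (mul_pos two_pos (cos_half_pos hs))

lemma hasDerivAt_halfSec {s : ℝ} (hs : s ∈ Ioo (-π) π) :
    HasDerivAt halfSec (sin (s / 2) * halfSec s ^ 2) s := by
  have hcos := cos_half_pos hs
  refine ((((hasDerivAt_id s).div_const 2).cos.const_mul 2).inv (by positivity)).congr_deriv ?_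
  simp only [halfSec, id]
  field_simp

lemma hasDerivAt_sin_half_mul_halfSec_sq {s : ℝ} (hs : s ∈ Ioo (-π) π) :
    HasDerivAt (fun s ↦ sin (s / 2) * halfSec s ^ 2)
      (cos (s / 2) / 2 * halfSec s ^ 2 + 2 * sin (s / 2) ^ 2 * halfSec s ^ 3) s := by
  refine (((hasDerivAt_id s).div_const 2).sin.mul ((hasDerivAt_halfSec hs).pow 2)).congr_deriv ?_
  simp only [id, Pi.pow_apply]
  ring

lemma convexOn_inv_of_concaveOn {𝕜 E : Type*} [Field 𝕜] [LinearOrder 𝕜] [IsStrictOrderedRing 𝕜]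
    [AddCommMonoid E] [SMul 𝕜 E] {D : Set E} {f : E → 𝕜} (hf : ConcaveOn 𝕜 D f)
    (hf_pos : ∀ x ∈ D, 0 < f x) : ConvexOn 𝕜 D fun x ↦ (f x)⁻¹ := by
  refine ⟨hf.1, fun x hx y hy p q hp hq hpq ↦ ?_⟩
  have hmean_pos : 0 < p • f x + q • f y :=
    convex_Ioi (0 : 𝕜) (hf_pos x hx) (hf_pos y hy) hp hq hpq
  calc (f (p • x + q • y))⁻¹ ≤ (p • f x + q • f y)⁻¹ :=
        inv_anti₀ hmean_pos (hf.2 hx hy hp hq hpq)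
    _ ≤ p • (f x)⁻¹ + q • (f y)⁻¹ := by
        simpa only [zpow_neg_one] using
          (convexOn_zpow (𝕜 := 𝕜) (-1)).2 (hf_pos x hx) (hf_pos y hy) hp hq hpq

lemma convexOn_halfSec : ConvexOn ℝ (Ioo (-π) π) halfSec := by
  refine convexOn_inv_of_concaveOn (ConcaveOn.smul zero_le_two ⟨convex_Ioo _ _, ?_⟩)
    fun s hs ↦ mul_pos two_pos (cos_half_pos hs)
  intro s hs t ht p q hp hq hpq
  have hmem {r : ℝ} (hr : r ∈ Ioo (-π) π) : r / 2 ∈ Icc (-(π / 2)) (π / 2) :=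
    ⟨by linarith [hr.1], by linarith [hr.2]⟩
  have hcos := strictConcaveOn_cos_Icc.concaveOn.2 (hmem hs) (hmem ht) hp hq hpq
  rwa [show p • (s / 2) + q • (t / 2) = (p • s + q • t) / 2 by
    simp only [smul_eq_mul]; ring] at hcos

/-- The bound for `|∫ s in 0..x, cos (a * s) / (2 * cos (s / 2))|` that two integrations by parts
produce, with the derivative of `halfSec` replaced by the larger `halfSec ^ 2` to make it convex
in `x`. -/
noncomputable def oscMajorant (a x : ℝ) : ℝ :=
  halfSec x / a + 2 * (halfSec x / a) ^ 2

lemma abs_integral_cos_mul_div_le_oscMajorant {a x : ℝ} (ha : 0 < a) (hx : x ∈ Ico 0 π) :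
    |∫ s in 0..x, cos (a * s) / (2 * cos (s / 2))| ≤ oscMajorant a x := by
  have hmem {s : ℝ} (hs : s ∈ Icc 0 x) : s ∈ Ioo (-π) π :=
    ⟨by linarith [hs.1, pi_pos], hs.2.trans_lt hx.2⟩
  have hx_pos := halfSec_pos (hmem ⟨hx.1, le_rfl⟩)
  calc |∫ s in 0..x, cos (a * s) / (2 * cos (s / 2))|
      = |∫ s in 0..x, halfSec s * cos (a * s)| := by
        simp only [halfSec, div_eq_inv_mul]
    _ ≤ |halfSec x| / a + 2 * (sin (x / 2) * halfSec x ^ 2) / a ^ 2 := by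
        refine abs_integral_mul_cos_mul_le_of_deriv2_nonneg ha hx.1
          (fun s hs ↦ hasDerivAt_halfSec (hmem hs))
          (fun s hs ↦ hasDerivAt_sin_half_mul_halfSec_sq (hmem hs)) (fun s hs ↦ ?_) (by simp)
        have hcos := cos_half_pos (hmem hs)
        have hsec := halfSec_pos (hmem hs)
        positivity
    _ ≤ halfSec x / a + 2 * (1 * halfSec x ^ 2) / a ^ 2 := by
        rw [abs_of_pos hx_pos]
        gcongr
        exact sin_le_one _
    _ = oscMajorant a x := by
        rw [oscMajorant]
        ring

lemma convexOn_oscMajorant {a : ℝ} (ha : 0 < a) : ConvexOn ℝ (Ioo (-π) π) (oscMajorant a) := by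
  have hw : ConvexOn ℝ (Ioo (-π) π) fun x ↦ halfSec x / a := by
    simpa only [smul_eq_mul, div_eq_inv_mul] using convexOn_halfSec.smul (inv_nonneg.2 ha.le)
  have hw_nonneg : ∀ ⦃x⦄, x ∈ Ioo (-π) π → 0 ≤ halfSec x / a :=
    fun x hx ↦ (div_pos (halfSec_pos hx) ha).le
  exact hw.add ((hw.pow hw_nonneg 2).smul zero_le_two)

lemma oscMajorant_le_of_le_mul_cos {a u x : ℝ} (hu : 0 < u) (hux : u ≤ a * cos (x / 2)) :
    oscMajorant a x ≤ 1 / (2 * u) + 2 * (1 / (2 * u)) ^ 2 := by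
  have hpos : 0 < a * cos (x / 2) := hu.trans_le hux
  calc oscMajorant a x
      = 1 / (2 * (a * cos (x / 2))) + 2 * (1 / (2 * (a * cos (x / 2)))) ^ 2 := by
        rw [oscMajorant, halfSec]
        ring
    _ ≤ 1 / (2 * u) + 2 * (1 / (2 * u)) ^ 2 := by gcongr

section Endpoints

variable {ν : ℝ}

lemma add_half_mul_pi_div_sq_le_one (hν : 3 ≤ ν) : (ν + 1 / 2) * (π / ν / 2) ^ 2 ≤ 1 := by
  have hmul : ν * (π / ν / 2) = π / 2 := by field_simp
  have hle : π / ν / 2 ≤ π / 6 := by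
    rw [div_div]
    gcongr
    linarith
  have hpos : 0 < π / ν / 2 := by positivity
  generalize π / ν / 2 = t at *
  calc (ν + 1 / 2) * t ^ 2 = (π / 2 + t / 2) * t := by rw [← hmul]; ring
    _ ≤ (π / 2 + π / 6 / 2) * (π / 6) := by gcongr
    _ ≤ 1 := by nlinarith [pi_pos, pi_lt_d4]

lemma le_add_half_mul_cos (hν : 3 ≤ ν) : ν ≤ (ν + 1 / 2) * cos (π / ν / 2) := by
  have hcos := one_sub_sq_div_two_le_cos (x := π / ν / 2)
  calc ν ≤ (ν + 1 / 2) * (1 - (π / ν / 2) ^ 2 / 2) := by linarith [add_half_mul_pi_div_sq_le_one hν]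
    _ ≤ _ := by gcongr

lemma pi_div_two_le_add_half_mul_sin (hν : 3 ≤ ν) : π / 2 ≤ (ν + 1 / 2) * sin (π / ν / 2) := by
  have hpos : 0 < π / ν / 2 := by positivity
  have hsin := sin_gt_sub_cube hpos
  have hsq := add_half_mul_pi_div_sq_le_one hν
  have hmul : ν * (π / ν / 2) = π / 2 := by field_simp
  generalize π / ν / 2 = t at *
  calc π / 2 = ν * t := hmul.symm
    _ ≤ ν * t + t / 2 * (1 - (ν + 1 / 2) * t ^ 2 / 3) :=
        le_add_of_nonneg_right (mul_nonneg (by positivity) (by linarith))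
    _ = (ν + 1 / 2) * (t - t ^ 3 / 6) := by ring
    _ ≤ _ := by gcongr

lemma oscMajorant_pi_div_le (hν : 8 ≤ ν) : oscMajorant (ν + 1 / 2) (π / ν) ≤ 0.18 * (π / ν) := by
  calc oscMajorant (ν + 1 / 2) (π / ν)
      ≤ 1 / (2 * ν) + 2 * (1 / (2 * ν)) ^ 2 :=
        oscMajorant_le_of_le_mul_cos (by positivity) (le_add_half_mul_cos (by linarith))
    _ = (1 / 2 + 1 / ν / 2) / ν := by field_simp
    _ ≤ (1 / 2 + 1 / 8 / 2) / ν := by gcongr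
    _ ≤ 0.18 * π / ν := by
        gcongr
        linarith [pi_gt_d4]
    _ = 0.18 * (π / ν) := mul_div_assoc _ _ _

lemma oscMajorant_pi_sub_pi_div_le (hν : 13 ≤ ν) :
    oscMajorant (ν + 1 / 2) (π - π / ν) ≤ 0.18 * (π - π / ν) := by
  have hsin : π / 2 ≤ (ν + 1 / 2) * cos ((π - π / ν) / 2) := by
    rw [sub_div, cos_pi_div_two_sub]
    exact pi_div_two_le_add_half_mul_sin (by linarith)
  have hpi_sq : 3.1415 ^ 2 ≤ π ^ 2 := by
    gcongr
    exact pi_gt_d4.le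
  calc oscMajorant (ν + 1 / 2) (π - π / ν)
      ≤ 1 / (2 * (π / 2)) + 2 * (1 / (2 * (π / 2))) ^ 2 :=
        oscMajorant_le_of_le_mul_cos (by positivity) hsin
    _ = (π + 2) / π ^ 2 := by field_simp
    _ ≤ 0.18 * (π - π / 13) := by
        rw [div_le_iff₀ (by positivity)]
        nlinarith [pi_gt_d4, pi_lt_d4]
    _ ≤ 0.18 * (π - π / ν) := by gcongr

end Endpoints

theorem hn_bound_general {ν x : ℝ} (hν : 13 ≤ ν) (hx : x ∈ Icc (π / ν) (π - π / ν)) :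
    |∫ s in 0..x, cos ((2 * ν + 1) * s / 2) / (2 * cos (s / 2))| ≤ 0.18 * x := by
  have hpos : 0 < π / ν := by positivity
  have hle : π / ν ≤ π - π / ν := hx.1.trans hx.2
  have hconvex : ConvexOn ℝ (Ioo (-π) π) fun y ↦ oscMajorant (ν + 1 / 2) y - 0.18 * y :=
    (convexOn_oscMajorant (by positivity)).sub
      ((concaveOn_id (convex_Ioo _ _)).smul (by norm_num))
  have hmajorant : oscMajorant (ν + 1 / 2) x - 0.18 * x ≤ 0 :=
    (hconvex.le_on_segment ⟨by linarith, by linarith⟩ ⟨by linarith, by linarith⟩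
      (Icc_subset_segment hx)).trans <|
      max_le (sub_nonpos.2 (oscMajorant_pi_div_le (by linarith)))
        (sub_nonpos.2 (oscMajorant_pi_sub_pi_div_le hν))
  calc |∫ s in 0..x, cos ((2 * ν + 1) * s / 2) / (2 * cos (s / 2))|
      = |∫ s in 0..x, cos ((ν + 1 / 2) * s) / (2 * cos (s / 2))| := by
        simp only [show ∀ s, (2 * ν + 1) * s / 2 = (ν + 1 / 2) * s from fun s ↦ by ring]
    _ ≤ oscMajorant (ν + 1 / 2) x :=
        abs_integral_cos_mul_div_le_oscMajorant (by positivity)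
          ⟨hpos.le.trans hx.1, by linarith [hx.2]⟩
    _ ≤ 0.18 * x := sub_nonpos.1 hmajorant

theorem hn_bound (n : ℕ) (hn : 21 ≤ n)
    (x : ℝ) (hx : x ∈ Set.Icc (Real.pi / n) (Real.pi - Real.pi / n)) :
    hOsc n x ≤ 0.18 * x := by
  refine le_trans (le_abs_self _) ?_
  rw [hOsc, abs_mul, abs_neg_one_pow, one_mul]
  exact hn_bound_general (by exact_mod_cast show 13 ≤ n by lia) hx
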